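/- With the apparatus fixed, let a and b be integers with b > a ≥ 1. Then there exists a constant C depending at most on s, k, r, t such that I_{a,b}(X) ≤ C(K_{a,b}(X) + M^{2s/3}·I_{a,b+1}(X)). -/

import Mathlib

open Filter MeasureTheory Finset

attribute [local instance] Classical.propDecidable

noncomputable section

/-- Number of integral solutions of the Vinogradov system of degree k
in 2s variables from [1,X]. -/
def Jcount (s k : ℕ) (X : ℝ) : ℕ :=
  Set.ncard {xy : (Fin s → ℤ) × (Fin s → ℤ) |
    (∀ i, 1 ≤ xy.1 i ∧ (xy.1 i : ℝ) ≤ X) ∧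
    (∀ i, 1 ≤ xy.2 i ∧ (xy.2 i : ℝ) ≤ X) ∧
    ∀ j ∈ Finset.Icc 1 k, ∑ i, ((xy.1 i) ^ j - (xy.2 i) ^ j) = 0}

/-- e(z) = exp(2πiz). -/
def ec (z : ℝ) : ℂ := Complex.exp (2 * Real.pi * Complex.I * z)

/-- The unit box [0,1)^k. -/
def box (k : ℕ) : Set (Fin k → ℝ) := Set.univ.pi fun _ => Set.Ico (0:ℝ) 1

/-- The exponential sum f_c(α;ξ), over 1 ≤ x ≤ X with x ≡ ξ (mod p^c). -/
def fexp (k p : ℕ) (X : ℝ) (c : ℕ) (ξ : ℤ) (α : Fin k → ℝ) : ℂ :=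
  ∑ x ∈ (Finset.Icc (1:ℤ) ⌊X⌋).filter (fun x => Int.ModEq ((p:ℤ)^c) x ξ),
    ec (∑ j : Fin k, α j * (x:ℝ)^((j:ℕ)+1))

/-- The set Ξ_c^r(ξ): r-tuples in [1,p^{c+1}], congruent to ξ mod p^c,
pairwise distinct mod p^{c+1}. -/
def XiSet (p r c : ℕ) (ξ : ℤ) : Set (Fin r → ℤ) :=
  {v | (∀ i, 1 ≤ v i ∧ v i ≤ (p:ℤ)^(c+1)) ∧
       (∀ i, Int.ModEq ((p:ℤ)^c) (v i) ξ) ∧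
       Function.Injective fun i => ((v i : ZMod (p^(c+1))))}

/-- The conditioned exponential sum F_c(α;ξ). -/
def Fexp (k p r : ℕ) (X : ℝ) (c : ℕ) (ξ : ℤ) (α : Fin k → ℝ) : ℂ :=
  ∑ᶠ v ∈ XiSet p r c ξ, ∏ i, fexp k p X (c+1) (v i) α

/-- The mean value I_{a,b}(X;ξ,η). -/
def Iab (k p r s : ℕ) (X : ℝ) (a b : ℕ) (ξ η : ℤ) : ℝ :=
  ∫ α in box k, ‖Fexp k p r X a ξ α‖^2 * ‖fexp k p X b η α‖^(2*s)

/-- The mean value K_{a,b}(X;ξ,η). -/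
def Kab (k p r t : ℕ) (X : ℝ) (a b : ℕ) (ξ η : ℤ) : ℝ :=
  ∫ α in box k, ‖Fexp k p r X a ξ α‖^2 * ‖Fexp k p r X b η α‖^(2*t)

/-- I_{a,b}(X): the maximum of I_{a,b}(X;ξ,η) over admissible ξ, η. -/
def Imax (k p r s : ℕ) (X : ℝ) (a b : ℕ) : ℝ :=
  sSup {v : ℝ | ∃ ξ η : ℤ, 1 ≤ ξ ∧ ξ ≤ (p:ℤ)^a ∧ 1 ≤ η ∧ η ≤ (p:ℤ)^b ∧
    ¬ Int.ModEq (p:ℤ) η ξ ∧ v = Iab k p r s X a b ξ η}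

/-- The set Ξ(η) of members of Ξ_0^r(0) avoiding the class of η mod p. -/
def XiTilde (p r : ℕ) (η : ℤ) : Set (Fin r → ℤ) :=
  {v | v ∈ XiSet p r 0 0 ∧ ∀ i, ¬ Int.ModEq (p:ℤ) (v i) η}

/-- The pre-conditioned sum F(α;η). -/
def Ftilde (k p r : ℕ) (X : ℝ) (η : ℤ) (α : Fin k → ℝ) : ℂ :=
  ∑ᶠ v ∈ XiTilde p r η, ∏ i, fexp k p X 1 (v i) α

/-- The mean value K̃_c(X;η). -/
def Ktilde (k p r t : ℕ) (X : ℝ) (c : ℕ) (η : ℤ) : ℝ :=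
  ∫ α in box k, ‖Ftilde k p r X η α‖^2 * ‖Fexp k p r X c η α‖^(2*t)

/-- K_{a,b}(X): for a ≥ 1 the maximum of K_{a,b}(X;ξ,η) over admissible ξ, η;
for a = 0 the pre-congruencing quantity K_{0,b}(X) = max_η K̃_b(X;η). -/
def Kmax (k p r t : ℕ) (X : ℝ) (a b : ℕ) : ℝ :=
  if a = 0 then sSup {v : ℝ | ∃ η : ℤ, 1 ≤ η ∧ η ≤ (p:ℤ)^b ∧ v = Ktilde k p r t X b η}
  else sSup {v : ℝ | ∃ ξ η : ℤ, 1 ≤ ξ ∧ ξ ≤ (p:ℤ)^a ∧ 1 ≤ η ∧ η ≤ (p:ℤ)^b ∧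
    ¬ Int.ModEq (p:ℤ) η ξ ∧ v = Kab k p r t X a b ξ η}

/-- λ = limsup_{Y→∞} log J_{sr,k}(Y)/log Y. -/
def lamExp (k sr : ℕ) : ℝ :=
  Filter.limsup (fun Y : ℝ => Real.log ((Jcount sr k Y : ℝ)) / Real.log Y) Filter.atTop

/-- θ = (16t)^{-N-1}. -/
def thetaC (t N : ℕ) : ℝ := (16*(t:ℝ)) ^ (-((N:ℝ)+1))

/-- δ = θ/(1000 N t^N). -/
def deltaC (t N : ℕ) : ℝ := thetaC t N / (1000 * (N:ℝ) * (t:ℝ)^N)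

/-- M = X^θ. -/
def Mval (t N : ℕ) (X : ℝ) : ℝ := X ^ thetaC t N

/-- κ = r(t+1) - (1/2)(t+r-k)(t+r-k-1+(2r-2)/(t-1)). -/
def kappa (k r t : ℕ) : ℝ :=
  (r : ℝ) * ((t : ℝ) + 1) -
    (1/2) * ((t : ℝ) + r - k) * ((t : ℝ) + r - k - 1 + (2*(r:ℝ) - 2)/((t:ℝ) - 1))

/-- Λ = λ - 2(s+r) + κ, with s = rt. -/
def LamC (k r t : ℕ) : ℝ := lamExp k (r*(t+1)) - 2*((r*(t+1) : ℕ) : ℝ) + kappa k r t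

/-- The normalised mean value ⟦K_{a,b}(X)⟧ = K_{a,b}(X) (X/M^b)^{-2s} (X/M^a)^{κ-2r}. -/
def normK (k p r t N : ℕ) (X : ℝ) (a b : ℕ) : ℝ :=
  Kmax k p r t X a b * (X / (Mval t N X)^b) ^ (-(2*((r*t : ℕ):ℝ))) *
    (X / (Mval t N X)^a) ^ (kappa k r t - 2*(r:ℝ))

/-- μ = (1/2)(t+r-k)(t+r-k-1). -/
def muC (k r t : ℕ) : ℝ := (1/2) * ((t:ℝ)+r-k) * ((t:ℝ)+r-k-1)

/-- ν = (1/2)(t+r-k)(k+r-t-1). -/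
def nuC (k r t : ℕ) : ℝ := (1/2) * ((t:ℝ)+r-k) * ((k:ℝ)+r-t-1)

/-!
Splitting the class of `η` modulo `p^b` into its `p` lifts modulo `p^(b+1)` writes `f_b(α;η)` as the
sum of the corresponding `f_{b+1}(α;ζ)`. The trigonometric polynomials with coefficients in `ℕ` form
a semiring whose members have nonnegative mean value, by orthogonality, so that mean values are
monotone for the ordering `f ≤ f + d` that it induces. In this ordering, with `s = rt`, the
pigeonhole principle bounds the expansion of `f_b ^ s` by the terms having `r` distinct lifts, which
contribute multiples of `F_b * f_b ^ (s - r)`, together with those repeating some lift `m` times,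
which contribute multiples of `(∑ f_{b+1} ^ m) * f_b ^ (s - m)`; here `m = 3` is the case of the
lemma. Young's inequality then removes the remaining powers of `f_b`, and Hölder's inequality for
the sum over the `p` lifts produces the factor `M ^ (2s/m)`.
-/

section TrigonometricPolynomials

variable {k : ℕ}

lemma ec_eq_fourierChar (z : ℝ) : ec z = Real.fourierChar z := by
  rw [ec, Real.fourierChar_apply]
  push_cast
  ring_nf

/-- The character `α ↦ e(α · n)` of the torus, as a function of its frequency `n`. -/
def expChar (k : ℕ) : AddChar (Fin k → ℤ) ((Fin k → ℝ) → ℂ) where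
  toFun n α := ec (∑ j, α j * n j)
  map_zero_eq_one' := by
    ext α
    simp [ec_eq_fourierChar]
  map_add_eq_mul' m n := by
    ext α
    simp [ec_eq_fourierChar, mul_add, Finset.sum_add_distrib, AddChar.map_add_eq_mul]

lemma expChar_apply (n : Fin k → ℤ) (α : Fin k → ℝ) : expChar k n α = ec (∑ j, α j * n j) := rfl

lemma star_expChar (n : Fin k → ℤ) : star (expChar k n) = expChar k (-n) := by
  ext α
  simp [expChar_apply, ec_eq_fourierChar, AddChar.map_neg_eq_inv]

lemma continuous_expChar (n : Fin k → ℤ) : Continuous (expChar k n) := by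
  change Continuous fun α : Fin k → ℝ => Complex.exp _
  fun_prop

lemma setIntegral_ec_mul_intCast (n : ℤ) :
    ∫ x in Set.Ico (0 : ℝ) 1, ec (x * n) = if n = 0 then 1 else 0 := by
  rw [integral_Ico_eq_integral_Ioc, ← intervalIntegral.integral_of_le zero_le_one]
  split_ifs with hn
  · simp [hn, ec]
  · have hfreq : 2 * Real.pi * Complex.I * n ≠ 0 := by simp [hn]
    have hperiod : Complex.exp (2 * Real.pi * Complex.I * n) = 1 := by
      rw [mul_comm, Complex.exp_int_mul_two_pi_mul_I]
    calc ∫ x in (0 : ℝ)..1, ec (x * n)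
        = ∫ x in (0 : ℝ)..1, Complex.exp (2 * Real.pi * Complex.I * n * x) := by
          refine intervalIntegral.integral_congr fun x _ => ?_
          simp only [ec, Complex.ofReal_mul, Complex.ofReal_intCast]
          ring_nf
      _ = 0 := by
          rw [integral_exp_mul_complex hfreq]
          simp [hperiod]

lemma setIntegral_box_expChar (n : Fin k → ℤ) :
    ∫ α in box k, expChar k n α = if n = 0 then 1 else 0 := by
  have hprod : ∀ α, expChar k n α = ∏ j, ec (α j * n j) := fun α => by
    simp only [expChar_apply, ec, Complex.ofReal_sum, Finset.mul_sum, Complex.exp_sum]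
  simp_rw [hprod]
  unfold _root_.box
  rw [volume_pi, Measure.restrict_pi_pi,
    integral_fintype_prod_eq_prod (f := fun j (x : ℝ) => ec (x * n j))]
  simp_rw [setIntegral_ec_mul_intCast]
  simp [Finset.prod_ite_zero, funext_iff]

/-- The semiring of trigonometric polynomials with coefficients in `ℕ`. It induces the ordering
`f ≤ f + d`, for `d` in the semiring, under which mean values are monotone. -/
def natTrigPoly (k : ℕ) : Subsemiring ((Fin k → ℝ) → ℂ) :=
  (MonoidHom.mrange (expChar k).toMonoidHom).subsemiringClosure

lemma expChar_mem_natTrigPoly (n : Fin k → ℤ) : expChar k n ∈ natTrigPoly k :=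
  AddSubmonoid.subset_closure ⟨.ofAdd n, rfl⟩

@[elab_as_elim]
lemma natTrigPoly_induction {P : (f : (Fin k → ℝ) → ℂ) → f ∈ natTrigPoly k → Prop}
    (expChar : ∀ n, P (expChar k n) (expChar_mem_natTrigPoly n)) (zero : P 0 (zero_mem _))
    (add : ∀ f g hf hg, P f hf → P g hg → P (f + g) (add_mem hf hg))
    {f : (Fin k → ℝ) → ℂ} (hf : f ∈ natTrigPoly k) : P f hf := by
  refine AddSubmonoid.closure_induction ?_ zero add hf
  rintro _ ⟨n, rfl⟩
  exact expChar n.toAdd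

lemma star_mem_natTrigPoly {f : (Fin k → ℝ) → ℂ} (hf : f ∈ natTrigPoly k) :
    star f ∈ natTrigPoly k := by
  induction hf using natTrigPoly_induction with
  | expChar n => exact star_expChar n ▸ expChar_mem_natTrigPoly (-n)
  | zero => exact (star_zero ((Fin k → ℝ) → ℂ)).symm ▸ zero_mem _
  | add f g _ _ hf hg => exact star_add f g ▸ add_mem hf hg

lemma continuous_of_mem_natTrigPoly {f : (Fin k → ℝ) → ℂ} (hf : f ∈ natTrigPoly k) :
    Continuous f := by
  induction hf using natTrigPoly_induction with
  | expChar n => exact continuous_expChar n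
  | zero => exact continuous_const
  | add f g _ _ hf hg => exact hf.add hg

lemma integrableOn_box {E : Type*} [NormedAddCommGroup E] {f : (Fin k → ℝ) → E}
    (hf : Continuous f) : IntegrableOn f (box k) :=
  (hf.continuousOn.integrableOn_compact (isCompact_Icc (a := 0) (b := 1))).mono_set
    fun _ hα => ⟨fun j => (hα j trivial).1, fun j => (hα j trivial).2.le⟩

lemma re_setIntegral_box_nonneg {f : (Fin k → ℝ) → ℂ} (hf : f ∈ natTrigPoly k) :
    0 ≤ (∫ α in box k, f α).re := by
  induction hf using natTrigPoly_induction with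
  | expChar n =>
    rw [setIntegral_box_expChar]
    split_ifs <;> simp
  | zero => simp
  | add f g hf hg hf₀ hg₀ =>
    simp only [Pi.add_apply]
    rw [integral_add (integrableOn_box (continuous_of_mem_natTrigPoly hf))
      (integrableOn_box (continuous_of_mem_natTrigPoly hg)), Complex.add_re]
    exact add_nonneg hf₀ hg₀

lemma setIntegral_box_norm_sq_le_of_add {h d : (Fin k → ℝ) → ℂ} (hh : h ∈ natTrigPoly k)
    (hd : d ∈ natTrigPoly k) :
    ∫ α in box k, ‖h α‖ ^ 2 ≤ ∫ α in box k, ‖h α‖ * ‖h α + d α‖ := by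
  have hcont := continuous_of_mem_natTrigPoly hh
  have dcont := continuous_of_mem_natTrigPoly hd
  have hcross : IntegrableOn (star h * d) (box k) := integrableOn_box (hcont.star.mul dcont)
  have hre : IntegrableOn (fun α => ((star h * d) α).re) (box k) := hcross.re
  have hsq : IntegrableOn (fun α => ‖h α‖ ^ 2) (box k) := integrableOn_box (by fun_prop)
  have hre_nonneg : 0 ≤ ∫ α in box k, ((star h * d) α).re :=
    (re_setIntegral_box_nonneg (mul_mem (star_mem_natTrigPoly hh) hd)).trans_eq
      (integral_re hcross).symm
  have hpoint (α) : ‖h α‖ ^ 2 + ((star h * d) α).re ≤ ‖h α‖ * ‖h α + d α‖ :=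
    calc ‖h α‖ ^ 2 + ((star h * d) α).re = (star (h α) * (h α + d α)).re := by
          simp only [mul_add, Complex.add_re, Complex.star_def, Complex.conj_mul', Pi.mul_apply,
            Pi.star_apply, ← Complex.ofReal_pow, Complex.ofReal_re]
      _ ≤ ‖star (h α) * (h α + d α)‖ := Complex.re_le_norm _
      _ = ‖h α‖ * ‖h α + d α‖ := by rw [norm_mul, norm_star]
  have hsum : IntegrableOn (fun α => ‖h α‖ ^ 2 + ((star h * d) α).re) (box k) := hsq.add hre
  calc ∫ α in box k, ‖h α‖ ^ 2
      ≤ ∫ α in box k, (‖h α‖ ^ 2 + ((star h * d) α).re) := by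
        rw [integral_add hsq hre]
        exact le_add_of_nonneg_right hre_nonneg
    _ ≤ ∫ α in box k, ‖h α‖ * ‖h α + d α‖ :=
        integral_mono hsum (integrableOn_box (by fun_prop)) hpoint

lemma setIntegral_box_norm_sq_le_two_mul {h d : (Fin k → ℝ) → ℂ} (hh : h ∈ natTrigPoly k)
    (hd : d ∈ natTrigPoly k) {W : (Fin k → ℝ) → ℝ} (hW : Continuous W)
    (hle : ∀ α, ‖h α‖ * ‖h α + d α‖ ≤ 1 / 2 * ‖h α‖ ^ 2 + W α) :
    ∫ α in box k, ‖h α‖ ^ 2 ≤ 2 * ∫ α in box k, W α := by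
  have hcont := continuous_of_mem_natTrigPoly hh
  have dcont := continuous_of_mem_natTrigPoly hd
  have habsorb :=
    calc ∫ α in box k, ‖h α‖ ^ 2
        ≤ ∫ α in box k, ‖h α‖ * ‖h α + d α‖ := setIntegral_box_norm_sq_le_of_add hh hd
      _ ≤ ∫ α in box k, (1 / 2 * ‖h α‖ ^ 2 + W α) :=
          integral_mono (integrableOn_box (by fun_prop)) (integrableOn_box (by fun_prop)) hle
      _ = 1 / 2 * (∫ α in box k, ‖h α‖ ^ 2) + ∫ α in box k, W α := by
          rw [integral_add (integrableOn_box (by fun_prop)) (integrableOn_box hW),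
            integral_const_mul]
  linarith

end TrigonometricPolynomials

section ConditionedSums

variable {R ι κ τ σ : Type*} [CommSemiring R] [Fintype ι] [Fintype κ] [Fintype τ] [Fintype σ]

/-- The part of the expansion of `(∑ i, g i) ^ card κ` formed by the tuples `u : κ → ι` subject to
the condition `Q`. -/
def condSum (g : ι → R) (Q : (κ → ι) → Prop) : R :=
  ∑ u with Q u, ∏ i, g (u i)

lemma condSum_mem (A : Subsemiring R) {g : ι → R} (hg : ∀ i, g i ∈ A) (Q : (κ → ι) → Prop) :
    condSum g Q ∈ A :=
  sum_mem fun _ _ => prod_mem fun _ _ => hg _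

lemma sum_pow_card_eq_sum_prod (g : ι → R) :
    (∑ i, g i) ^ Fintype.card σ = ∑ v : σ → ι, ∏ i, g (v i) := by
  rw [← Fintype.piFinset_univ, ← Finset.prod_univ_sum, Finset.prod_const, Finset.card_univ]

lemma condSum_comp_inl (g : ι → R) (e : κ ⊕ τ ≃ σ) (Q : (κ → ι) → Prop) :
    condSum g (fun v : σ → ι => Q (v ∘ e ∘ Sum.inl)) =
      condSum g Q * (∑ i, g i) ^ Fintype.card τ := by
  simp only [condSum, Finset.sum_filter]
  rw [sum_pow_card_eq_sum_prod, Finset.sum_mul_sum, ← Fintype.sum_prod_type']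
  refine Fintype.sum_equiv
    ((e.symm.arrowCongr (Equiv.refl ι)).trans (Equiv.sumArrowEquivProdArrow _ _ _)) _ _ fun v => ?_
  rw [← Equiv.prod_comp e, Fintype.prod_sum_type, ite_mul, zero_mul]
  rfl

lemma condSum_comp_embedding (g : ι → R) (ρ : κ ↪ σ) (Q : (κ → ι) → Prop) :
    condSum g (fun v : σ → ι => Q (v ∘ ρ)) =
      condSum g Q * (∑ i, g i) ^ (Fintype.card σ - Fintype.card κ) := by
  let e : κ ⊕ ↥(Set.range ρ)ᶜ ≃ σ :=
    ((Equiv.ofInjective ρ ρ.injective).sumCongr (Equiv.refl _)).trans (Equiv.Set.sumCompl _)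
  have hcard : Fintype.card ↥(Set.range ρ)ᶜ = Fintype.card σ - Fintype.card κ := by
    rw [← Fintype.card_congr e, Fintype.card_sum, Nat.add_sub_cancel_left]
  rw [← hcard, ← condSum_comp_inl g e]
  rfl

lemma condSum_constant [Nonempty κ] (g : ι → R) :
    condSum g (fun u : κ → ι => ∀ i j, u i = u j) = ∑ i, g i ^ Fintype.card κ := by
  have hconst : ({u | ∀ i j, u i = u j} : Finset (κ → ι)) =
      Finset.univ.map ⟨Function.const κ, Function.const_injective⟩ := by
    ext u
    obtain ⟨o⟩ := ‹Nonempty κ›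
    simp only [Finset.mem_filter_univ, Finset.mem_map, Finset.mem_univ, true_and,
      Function.Embedding.coeFn_mk]
    exact ⟨fun hu => ⟨u o, funext (hu o)⟩, by rintro ⟨x, rfl⟩ _ _; rfl⟩
  simp [condSum, hconst]

lemma exists_pow_add_eq_sum_condSum {β : Type*} [Fintype β] (A : Subsemiring R) {g : ι → R}
    (hg : ∀ i, g i ∈ A) (P : β → (σ → ι) → Prop) (hP : ∀ v, ∃ b, P b v) :
    ∃ d ∈ A, (∑ i, g i) ^ Fintype.card σ + d = ∑ b, condSum g (P b) := by
  -- A tuple satisfying `n` of the conditions is counted `n - 1` times too often.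
  refine ⟨∑ v : σ → ι, (#{b | P b v} - 1) • ∏ i, g (v i),
    sum_mem fun v _ => nsmul_mem (prod_mem fun i _ => hg _) _, ?_⟩
  simp only [condSum, Finset.sum_filter]
  rw [sum_pow_card_eq_sum_prod, Finset.sum_comm, ← Finset.sum_add_distrib]
  refine Finset.sum_congr rfl fun v _ => ?_
  have hpos : 1 ≤ #{b | P b v} := Finset.card_pos.2 ((hP v).imp fun b hb => by simpa using hb)
  rw [← Finset.sum_filter, Finset.sum_const, ← succ_nsmul', Nat.sub_add_cancel hpos]

lemma exists_embedding_comp_injective_or_constant {α : Type*} {r m : ℕ}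
    (h : (r - 1) * (m - 1) < Fintype.card σ) (v : σ → α) :
    (∃ ρ : Fin r ↪ σ, Function.Injective (v ∘ ρ)) ∨
      ∃ ρ : Fin m ↪ σ, ∀ i j, (v ∘ ρ) i = (v ∘ ρ) j := by
  rcases le_or_gt r #(Finset.univ.image v) with hr | hr
  · left
    obtain ⟨T, hT, hTr⟩ := Finset.exists_subset_card_eq hr
    have hpreimage (i : Fin r) : ∃ x, v x = (T.equivFinOfCardEq hTr).symm i := by
      simpa using hT ((T.equivFinOfCardEq hTr).symm i).2
    choose w hw using hpreimage
    have hinj : Function.Injective (v ∘ w) := by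
      rw [show v ∘ w = _ from funext hw]
      exact Subtype.val_injective.comp (Equiv.injective _)
    exact ⟨⟨w, hinj.of_comp⟩, hinj⟩
  · right
    obtain ⟨y, -, hy⟩ := Finset.exists_lt_card_fiber_of_mul_lt_card_of_maps_to
      (n := m - 1) (fun a _ => Finset.mem_image_of_mem v (Finset.mem_univ a))
      ((Nat.mul_le_mul_right _ (Nat.le_pred_of_lt hr)).trans_lt h)
    obtain ⟨T, hT, hTm⟩ := Finset.exists_subset_card_eq (Nat.le_of_pred_lt hy)
    let w := (T.equivFinOfCardEq hTm).symm
    have hw (i) : v (w i) = y := (Finset.mem_filter.1 (hT (w i).2)).2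
    exact ⟨w.toEmbedding.trans (Function.Embedding.subtype _), fun i j => (hw i).trans (hw j).symm⟩

lemma exists_pow_add_eq_injective_add_constant (A : Subsemiring R) {g : ι → R} (hg : ∀ i, g i ∈ A)
    {r m : ℕ} (hm : 0 < m) (h : (r - 1) * (m - 1) < Fintype.card σ) :
    ∃ d ∈ A, (∑ i, g i) ^ Fintype.card σ + d =
      Fintype.card (Fin r ↪ σ) * (condSum g (Function.Injective (α := Fin r)) *
        (∑ i, g i) ^ (Fintype.card σ - r)) +
      Fintype.card (Fin m ↪ σ) * ((∑ i, g i ^ m) * (∑ i, g i) ^ (Fintype.card σ - m)) := by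
  have : Nonempty (Fin m) := ⟨⟨0, hm⟩⟩
  let P : (Fin r ↪ σ) ⊕ (Fin m ↪ σ) → (σ → ι) → Prop :=
    Sum.elim (fun ρ v => Function.Injective (v ∘ ρ)) fun ρ v => ∀ i j, (v ∘ ρ) i = (v ∘ ρ) j
  obtain ⟨d, hd, hsum⟩ := exists_pow_add_eq_sum_condSum A hg P fun v => by
    simpa only [P, Sum.exists, Sum.elim_inl, Sum.elim_inr] using
      exists_embedding_comp_injective_or_constant h v
  have hinjective (ρ : Fin r ↪ σ) := condSum_comp_embedding g ρ fun u => Function.Injective u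
  have hconstant (ρ : Fin m ↪ σ) := condSum_comp_embedding g ρ fun u => ∀ i j, u i = u j
  simp only [condSum_constant, Fintype.card_fin] at hinjective hconstant
  refine ⟨d, hd, hsum.trans ?_⟩
  simp only [P, Fintype.sum_sum_type, Sum.elim_inl, Sum.elim_inr, hinjective, hconstant,
    Finset.sum_const, Finset.card_univ, nsmul_eq_mul]

end ConditionedSums

section PointwiseBounds

lemma pow_mul_pow_sub_le_pow_add_pow {x z : ℝ} (hx : 0 ≤ x) (hz : 0 ≤ z) {m n : ℕ} (hmn : m ≤ n) :
    z ^ m * x ^ (n - m) ≤ x ^ n + z ^ n :=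
  calc z ^ m * x ^ (n - m) ≤ max x z ^ m * max x z ^ (n - m) := by gcongr <;> simp
    _ = max x z ^ n := by rw [← pow_add, Nat.add_sub_cancel' hmn]
    _ ≤ x ^ n + z ^ n := by
      rcases max_choice x z with h | h <;> rw [h]
      · exact le_add_of_nonneg_right (pow_nonneg hz n)
      · exact le_add_of_nonneg_left (pow_nonneg hx n)

lemma mul_mul_pow_sub_le {N x y : ℝ} (hN : 0 ≤ N) (hx : 0 ≤ x) (hy : 0 ≤ y) {m n : ℕ}
    (hm : 0 < m) (hmn : m ≤ n) :
    N * (y * x ^ (n - m)) ≤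
      1 / 4 * x ^ n + (4 * N) ^ ((n : ℝ) / m) * y ^ ((n : ℝ) / m) := by
  set z := (4 * N * y) ^ ((1 : ℝ) / m)
  have hz : 0 ≤ z := by positivity
  have hzm : z ^ m = 4 * N * y := by
    rw [← Real.rpow_mul_natCast (by positivity), one_div_mul_cancel (by positivity), Real.rpow_one]
  have hzn : z ^ n = (4 * N) ^ ((n : ℝ) / m) * y ^ ((n : ℝ) / m) := by
    rw [← Real.rpow_mul_natCast (by positivity), one_div_mul_eq_div,
      Real.mul_rpow (by positivity) hy]
  have hyoung := pow_mul_pow_sub_le_pow_add_pow hx hz hmn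
  rw [← hzn]
  rw [hzm] at hyoung
  have := pow_nonneg hz n
  linarith

lemma pow_mul_card_embedding_mul_le {x y : ℝ} (hx : 0 ≤ x) (hy : 0 ≤ y) {m : ℕ} (hm : 0 < m)
    (n : ℕ) :
    x ^ n * (Fintype.card (Fin m ↪ Fin n) * (y * x ^ (n - m))) ≤
      1 / 4 * x ^ (2 * n) + (4 * Fintype.card (Fin m ↪ Fin n) : ℝ) ^ (((2 * n : ℕ) : ℝ) / m) *
        y ^ (((2 * n : ℕ) : ℝ) / m) := by
  rcases isEmpty_or_nonempty (Fin m ↪ Fin n) with hempty | ⟨⟨ρ⟩⟩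
  · rw [Fintype.card_eq_zero, Nat.cast_zero, zero_mul, mul_zero]
    positivity
  · have hmn : m ≤ n := by simpa using Fintype.card_le_of_embedding ρ
    calc _ = Fintype.card (Fin m ↪ Fin n) * (y * x ^ (2 * n - m)) := by
          rw [two_mul, Nat.add_sub_assoc hmn, pow_add]
          ring
      _ ≤ _ := mul_mul_pow_sub_le (Nat.cast_nonneg _) hx hy hm (by lia)

lemma norm_sum_pow_rpow_div_le {R ι : Type*} [SeminormedRing R] [Fintype ι] (g : ι → R) {m n : ℕ}
    (hm : 0 < m) (hmn : m ≤ n) :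
    ‖∑ i, g i ^ m‖ ^ ((n : ℝ) / m) ≤
      (Fintype.card ι : ℝ) ^ ((n : ℝ) / m - 1) * ∑ i, ‖g i‖ ^ n := by
  have hexp : 1 ≤ (n : ℝ) / m := (one_le_div₀ (by positivity)).2 (by exact_mod_cast hmn)
  have hpow (i) : (‖g i‖ ^ m) ^ ((n : ℝ) / m) = ‖g i‖ ^ n := by
    rw [← Real.rpow_natCast_mul (norm_nonneg _), mul_div_cancel₀ _ (by positivity),
      Real.rpow_natCast]
  calc ‖∑ i, g i ^ m‖ ^ ((n : ℝ) / m) ≤ (∑ i, ‖g i‖ ^ m) ^ ((n : ℝ) / m) := by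
        gcongr
        exact norm_sum_le_of_le _ fun i _ => norm_pow_le' (g i) hm
    _ ≤ (Fintype.card ι : ℝ) ^ ((n : ℝ) / m - 1) * ∑ i, (‖g i‖ ^ m) ^ ((n : ℝ) / m) :=
        Real.rpow_sum_le_const_mul_sum_rpow_of_nonneg _ hexp fun i _ => by positivity
    _ = _ := by simp_rw [hpow]

lemma exists_norm_pow_mul_norm_le {r t m : ℕ} (hr : 0 < r) (hm : 0 < m) (hmrt : m ≤ 2 * (r * t)) :
    ∃ C : ℝ, 0 < C ∧ ∀ {ι : Type} [Fintype ι] (f F : ℂ) (g : ι → ℂ),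
      ‖f‖ ^ (r * t) * ‖Fintype.card (Fin r ↪ Fin (r * t)) * (F * f ^ (r * t - r)) +
          Fintype.card (Fin m ↪ Fin (r * t)) * ((∑ i, g i ^ m) * f ^ (r * t - m))‖ ≤
        1 / 2 * ‖f‖ ^ (2 * (r * t)) + C * (‖F‖ ^ (2 * t) +
          (Fintype.card ι : ℝ) ^ (2 * ((r * t : ℕ) : ℝ) / m - 1) *
            ∑ i, ‖g i‖ ^ (2 * (r * t))) := by
  set s := r * t with hs
  set N₁ := Fintype.card (Fin r ↪ Fin s)
  set N₂ := Fintype.card (Fin m ↪ Fin s)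
  set C₁ : ℝ := (4 * N₁) ^ (2 * t)
  set C₂ : ℝ := (4 * N₂) ^ (2 * (s : ℝ) / m)
  refine ⟨C₁ + C₂ + 1, by positivity, fun {ι} _ f F g => ?_⟩
  set P := ∑ i, g i ^ m
  set V := ‖F‖ ^ (2 * t)
  set W := (Fintype.card ι : ℝ) ^ (2 * (s : ℝ) / m - 1) * ∑ i, ‖g i‖ ^ (2 * s)
  have hV : 0 ≤ V := by positivity
  have hW : 0 ≤ W := by positivity
  have hF : ‖f‖ ^ s * (N₁ * (‖F‖ * ‖f‖ ^ (s - r))) ≤ 1 / 4 * ‖f‖ ^ (2 * s) + C₁ * V := by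
    have hexp : ((2 * s : ℕ) : ℝ) / r = (2 * t : ℕ) := by
      rw [hs]
      push_cast
      field_simp
    simpa only [hexp, Real.rpow_natCast] using
      pow_mul_card_embedding_mul_le (norm_nonneg f) (norm_nonneg F) hr s
  have hP : ‖f‖ ^ s * (N₂ * (‖P‖ * ‖f‖ ^ (s - m))) ≤ 1 / 4 * ‖f‖ ^ (2 * s) + C₂ * W := by
    have hcast : ((2 * s : ℕ) : ℝ) / m = 2 * (s : ℝ) / m := by rw [Nat.cast_mul, Nat.cast_two]
    have hyoung := pow_mul_card_embedding_mul_le (norm_nonneg f) (norm_nonneg P) hm s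
    have hholder := norm_sum_pow_rpow_div_le g hm hmrt
    rw [hcast] at hyoung hholder
    exact hyoung.trans (by gcongr)
  calc ‖f‖ ^ s * ‖N₁ * (F * f ^ (s - r)) + N₂ * (P * f ^ (s - m))‖
      ≤ ‖f‖ ^ s * (N₁ * (‖F‖ * ‖f‖ ^ (s - r)) + N₂ * (‖P‖ * ‖f‖ ^ (s - m))) := by
        gcongr
        exact (norm_add_le _ _).trans_eq (by simp)
    _ ≤ (1 / 4 * ‖f‖ ^ (2 * s) + C₁ * V) + (1 / 4 * ‖f‖ ^ (2 * s) + C₂ * W) := by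
        rw [mul_add]
        exact add_le_add hF hP
    _ ≤ 1 / 2 * ‖f‖ ^ (2 * s) + (C₁ + C₂ + 1) * (V + W) := by
        have : 0 ≤ C₁ * W := by positivity
        have : 0 ≤ C₂ * V := by positivity
        linarith

end PointwiseBounds

section MeanValues

lemma exists_setIntegral_norm_sum_pow_le {r t m : ℕ} (hr : 0 < r) (hm : 0 < m)
    (hmrt : m ≤ 2 * (r * t)) (h : (r - 1) * (m - 1) < r * t) :
    ∃ C : ℝ, 0 < C ∧ ∀ {k : ℕ} {ι : Type} [Fintype ι] {A : (Fin k → ℝ) → ℂ}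
      {g : ι → (Fin k → ℝ) → ℂ}, A ∈ natTrigPoly k → (∀ i, g i ∈ natTrigPoly k) →
      ∫ α in box k, ‖A α‖ ^ 2 * ‖(∑ i, g i) α‖ ^ (2 * (r * t)) ≤
        C * ((∫ α in box k, ‖A α‖ ^ 2 *
            ‖condSum g (Function.Injective (α := Fin r)) α‖ ^ (2 * t)) +
          (Fintype.card ι : ℝ) ^ (2 * ((r * t : ℕ) : ℝ) / m - 1) *
            ∑ i, ∫ α in box k, ‖A α‖ ^ 2 * ‖g i α‖ ^ (2 * (r * t))) := by
  obtain ⟨C, hC, hpoint⟩ := exists_norm_pow_mul_norm_le hr hm hmrt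
  refine ⟨2 * C, by positivity, fun {k ι} _ {A g} hA hg => ?_⟩
  obtain ⟨d, hd, hexpand⟩ := exists_pow_add_eq_injective_add_constant (σ := Fin (r * t))
    (natTrigPoly k) hg hm (by rwa [Fintype.card_fin])
  rw [Fintype.card_fin] at hexpand
  set f := ∑ i, g i
  set F := condSum g (Function.Injective (α := Fin r))
  set E := (Fintype.card ι : ℝ) ^ (2 * ((r * t : ℕ) : ℝ) / m - 1)
  have hf : f ∈ natTrigPoly k := sum_mem fun i _ => hg i
  have hAcont := continuous_of_mem_natTrigPoly hA
  have hFcont := continuous_of_mem_natTrigPoly (condSum_mem _ hg (Function.Injective (α := Fin r)))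
  have hgcont (i) := continuous_of_mem_natTrigPoly (hg i)
  have hle (α) : ‖(A * f ^ (r * t)) α‖ * ‖(A * f ^ (r * t)) α + (A * d) α‖ ≤
      1 / 2 * ‖(A * f ^ (r * t)) α‖ ^ 2 + C * (‖A α‖ ^ 2 * ‖F α‖ ^ (2 * t) +
        E * ∑ i, ‖A α‖ ^ 2 * ‖g i α‖ ^ (2 * (r * t))) := by
    rw [← Pi.add_apply (A * f ^ (r * t)), ← mul_add, hexpand]
    have hscaled := mul_le_mul_of_nonneg_left (hpoint (f α) (F α) fun i => g i α) (sq_nonneg ‖A α‖)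
    simp only [Pi.mul_apply, Pi.add_apply, Pi.pow_apply, Pi.natCast_apply, Finset.sum_apply,
      norm_mul, norm_pow, ← Finset.mul_sum] at hscaled ⊢
    refine (Eq.trans_le ?_ hscaled).trans_eq ?_
    · ring
    · ring
  calc ∫ α in box k, ‖A α‖ ^ 2 * ‖f α‖ ^ (2 * (r * t))
      = ∫ α in box k, ‖(A * f ^ (r * t)) α‖ ^ 2 := by
        simp only [Pi.mul_apply, Pi.pow_apply, norm_mul, norm_pow, mul_pow, ← pow_mul']
    _ ≤ 2 * ∫ α in box k, C * (‖A α‖ ^ 2 * ‖F α‖ ^ (2 * t) +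
          E * ∑ i, ‖A α‖ ^ 2 * ‖g i α‖ ^ (2 * (r * t))) :=
        setIntegral_box_norm_sq_le_two_mul (mul_mem hA (pow_mem hf _)) (mul_mem hA hd)
          (by fun_prop) hle
    _ = _ := by
        rw [integral_const_mul, integral_add (integrableOn_box (by fun_prop))
          (integrableOn_box (by fun_prop)), integral_const_mul,
          integral_finsetSum _ fun i _ => integrableOn_box (by fun_prop), mul_assoc]

end MeanValues

section ResidueClasses

variable {p c : ℕ} {ξ x y q : ℤ}

lemma toIocMod_zero_eq_iff_modEq (hq : 0 < q) (hy : y ∈ Finset.Ioc 0 q) :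
    toIocMod hq 0 x = y ↔ x ≡ y [ZMOD q] := by
  have hself : toIocMod hq 0 y = y := (toIocMod_eq_self hq).2 (by simpa using hy)
  rw [← AddCommGroup.modEq_iff_intModEq, AddCommGroup.modEq_iff_zsmul',
    ← toIocMod_eq_toIocMod hq (a := 0), hself]

lemma eq_of_modEq_of_mem_Ioc (hx : x ∈ Finset.Ioc 0 q) (hy : y ∈ Finset.Ioc 0 q)
    (h : x ≡ y [ZMOD q]) : x = y := by
  have hq : 0 < q := by grind
  rw [← (toIocMod_zero_eq_iff_modEq hq hx).2 rfl, (toIocMod_zero_eq_iff_modEq hq hy).2 h]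

/-- The representatives in `[1, p^(c+1)]` of the classes modulo `p^(c+1)` into which the class of
`ξ` modulo `p^c` splits. -/
def liftClasses (p c : ℕ) (ξ : ℤ) : Finset ℤ :=
  {x ∈ Finset.Ioc 0 ((p : ℤ) ^ (c + 1)) | x ≡ ξ [ZMOD (p : ℤ) ^ c]}

lemma mem_liftClasses :
    x ∈ liftClasses p c ξ ↔ x ∈ Finset.Ioc 0 ((p : ℤ) ^ (c + 1)) ∧ x ≡ ξ [ZMOD (p : ℤ) ^ c] :=
  Finset.mem_filter

lemma card_liftClasses (hp : 0 < p) : #(liftClasses p c ξ) = p := by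
  have hq : (0 : ℤ) < (p : ℤ) ^ c := by positivity
  have hcard := Int.Ioc_filter_modEq_card 0 ((p : ℤ) ^ (c + 1)) hq ξ
  have hdiv : (((p : ℤ) ^ (c + 1) : ℤ) - ξ : ℚ) / ((p : ℤ) ^ c : ℤ) =
      (0 - ξ) / ((p : ℤ) ^ c : ℤ) + p := by
    push_cast
    field_simp
    ring
  rw [hdiv, Int.floor_add_natCast, Int.cast_zero, add_sub_cancel_left,
    max_eq_left p.cast_nonneg] at hcard
  exact_mod_cast hcard

lemma fexp_mem_natTrigPoly (k p : ℕ) (X : ℝ) (c : ℕ) (ξ : ℤ) : fexp k p X c ξ ∈ natTrigPoly k := by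
  have hchar : fexp k p X c ξ =
      ∑ x ∈ Finset.Icc 1 ⌊X⌋ with x ≡ ξ [ZMOD (p : ℤ) ^ c],
        expChar k (fun j => x ^ ((j : ℕ) + 1)) := by
    ext α
    simp [fexp, expChar_apply]
  rw [hchar]
  exact sum_mem fun x _ => expChar_mem_natTrigPoly _

lemma fexp_eq_sum_liftClasses (k : ℕ) (hp : 0 < p) (X : ℝ) (c : ℕ) (ξ : ℤ) :
    fexp k p X c ξ = ∑ ζ : liftClasses p c ξ, fexp k p X (c + 1) ζ := by
  have hq : 0 < (p : ℤ) ^ (c + 1) := by positivity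
  have hdvd : (p : ℤ) ^ c ∣ (p : ℤ) ^ (c + 1) := pow_dvd_pow _ c.le_succ
  have hmem (x) : toIocMod hq 0 x ∈ Finset.Ioc 0 ((p : ℤ) ^ (c + 1)) := by
    simpa using toIocMod_mem_Ioc hq 0 x
  have hmod (x) : x ≡ toIocMod hq 0 x [ZMOD (p : ℤ) ^ (c + 1)] :=
    (toIocMod_zero_eq_iff_modEq hq (hmem x)).1 rfl
  ext α
  rw [Finset.sum_apply,
    Finset.sum_coe_sort (liftClasses p c ξ) (fun ζ : ℤ => fexp k p X (c + 1) ζ α)]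
  simp only [fexp]
  rw [← Finset.sum_fiberwise_of_maps_to (t := liftClasses p c ξ) (g := toIocMod hq 0)
    fun x hx => mem_liftClasses.2
      ⟨hmem x, ((hmod x).of_dvd hdvd).symm.trans (Finset.mem_filter.1 hx).2⟩]
  refine Finset.sum_congr rfl fun ζ hζ => Finset.sum_congr ?_ fun _ _ => rfl
  obtain ⟨hζq, hζξ⟩ := mem_liftClasses.1 hζ
  ext x
  simp only [Finset.mem_filter, toIocMod_zero_eq_iff_modEq hq hζq]
  exact ⟨fun h => ⟨h.1.1, h.2⟩, fun h => ⟨⟨h.1, (h.2.of_dvd hdvd).trans hζξ⟩, h.2⟩⟩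

lemma Fexp_eq_condSum (k p r : ℕ) (X : ℝ) (c : ℕ) (ξ : ℤ) :
    Fexp k p r X c ξ = condSum (fun ζ : liftClasses p c ξ => fexp k p X (c + 1) ζ)
      (Function.Injective (α := Fin r)) := by
  have himage : XiSet p r c ξ = (fun (u : Fin r → liftClasses p c ξ) i => (u i : ℤ)) ''
      {u | Function.Injective u} := by
    ext v
    simp only [Set.mem_image, Set.mem_ofPred_eq]
    constructor
    · rintro ⟨hrange, hclass, hinj⟩
      refine ⟨fun i => ⟨v i, mem_liftClasses.2 ⟨Finset.mem_Ioc.2 (hrange i), hclass i⟩⟩,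
        fun i j hij => hinj ?_, rfl⟩
      simpa using congrArg (fun z : liftClasses p c ξ => ((z : ℤ) : ZMod (p ^ (c + 1)))) hij
    · rintro ⟨u, hu, rfl⟩
      have hu_mem (i) := mem_liftClasses.1 (u i).2
      refine ⟨fun i => Finset.mem_Ioc.1 (hu_mem i).1, fun i => (hu_mem i).2,
        fun i j hij => hu (Subtype.ext (eq_of_modEq_of_mem_Ioc (hu_mem i).1 (hu_mem j).1 ?_))⟩
      simpa using (ZMod.intCast_eq_intCast_iff _ _ _).1 hij
  have hval : Function.Injective fun (u : Fin r → liftClasses p c ξ) i => (u i : ℤ) :=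
    Subtype.val_injective.comp_left
  ext α
  rw [Fexp, himage, finsum_mem_image hval.injOn,
    finsum_mem_eq_finite_toFinset_sum _ (Set.toFinite _), condSum, Finset.sum_apply]
  simp only [Finset.prod_apply]
  exact Finset.sum_congr (by ext u; simp) fun _ _ => rfl

lemma Fexp_mem_natTrigPoly (k p r : ℕ) (X : ℝ) (c : ℕ) (ξ : ℤ) :
    Fexp k p r X c ξ ∈ natTrigPoly k :=
  Fexp_eq_condSum k p r X c ξ ▸ condSum_mem _ (fun _ => fexp_mem_natTrigPoly _ _ _ _ _) _

end ResidueClasses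

section Maxima

variable {p a b : ℕ} {ξ η ζ : ℤ}

/-- The pairs `(ξ, η)` of representatives modulo `p^a` and `p^b` over which the maxima
`I_{a,b}(X)` and `K_{a,b}(X)` are taken. -/
def admissiblePairs (p a b : ℕ) : Finset (ℤ × ℤ) :=
  {z ∈ Finset.Ioc 0 ((p : ℤ) ^ a) ×ˢ Finset.Ioc 0 ((p : ℤ) ^ b) | ¬ z.2 ≡ z.1 [ZMOD p]}

lemma mem_admissiblePairs_of_mem_liftClasses (hb : b ≠ 0) (hξη : (ξ, η) ∈ admissiblePairs p a b)
    (hζ : ζ ∈ liftClasses p b η) : (ξ, ζ) ∈ admissiblePairs p a (b + 1) := by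
  simp only [admissiblePairs, Finset.mem_filter, Finset.mem_product] at hξη ⊢
  obtain ⟨hζq, hζη⟩ := mem_liftClasses.1 hζ
  exact ⟨⟨hξη.1.1, hζq⟩, fun h => hξη.2 ((hζη.of_dvd (dvd_pow_self _ hb)).symm.trans h)⟩

lemma sSup_admissible_eq_iSup (φ : ℤ → ℤ → ℝ) :
    sSup {v : ℝ | ∃ ξ η : ℤ, 1 ≤ ξ ∧ ξ ≤ (p : ℤ) ^ a ∧ 1 ≤ η ∧ η ≤ (p : ℤ) ^ b ∧
      ¬ η ≡ ξ [ZMOD p] ∧ v = φ ξ η} = ⨆ z : admissiblePairs p a b, φ z.1.1 z.1.2 := by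
  congr 1
  ext v
  simp [admissiblePairs, Order.one_le_iff_pos, and_assoc, eq_comm]

lemma Imax_eq_iSup (k p r s : ℕ) (X : ℝ) (a b : ℕ) :
    Imax k p r s X a b = ⨆ z : admissiblePairs p a b, Iab k p r s X a b z.1.1 z.1.2 :=
  sSup_admissible_eq_iSup _

lemma Kmax_eq_iSup (k p r t : ℕ) (X : ℝ) (ha : a ≠ 0) (b : ℕ) :
    Kmax k p r t X a b = ⨆ z : admissiblePairs p a b, Kab k p r t X a b z.1.1 z.1.2 :=
  (if_neg ha).trans (sSup_admissible_eq_iSup _)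

lemma Iab_le_Imax (k r s : ℕ) (X : ℝ) (h : (ξ, η) ∈ admissiblePairs p a b) :
    Iab k p r s X a b ξ η ≤ Imax k p r s X a b :=
  (le_ciSup (Finite.bddAbove_range fun z : admissiblePairs p a b =>
    Iab k p r s X a b z.1.1 z.1.2) ⟨_, h⟩).trans_eq (Imax_eq_iSup ..).symm

lemma Kab_le_Kmax (k r t : ℕ) (X : ℝ) (ha : a ≠ 0) (h : (ξ, η) ∈ admissiblePairs p a b) :
    Kab k p r t X a b ξ η ≤ Kmax k p r t X a b :=
  (le_ciSup (Finite.bddAbove_range fun z : admissiblePairs p a b =>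
    Kab k p r t X a b z.1.1 z.1.2) ⟨_, h⟩).trans_eq (Kmax_eq_iSup _ _ _ _ _ ha _).symm

lemma Imax_nonneg (k p r s : ℕ) (X : ℝ) (a b : ℕ) : 0 ≤ Imax k p r s X a b := by
  rw [Imax_eq_iSup]
  exact Real.iSup_nonneg fun _ => integral_nonneg fun _ => by positivity

lemma Kmax_nonneg (k p r t : ℕ) (X : ℝ) (ha : a ≠ 0) (b : ℕ) : 0 ≤ Kmax k p r t X a b := by
  rw [Kmax_eq_iSup _ _ _ _ _ ha]
  exact Real.iSup_nonneg fun _ => integral_nonneg fun _ => by positivity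

lemma sum_Iab_liftClasses_le (k r s : ℕ) (X : ℝ) (hp : 0 < p) (hb : b ≠ 0)
    (h : (ξ, η) ∈ admissiblePairs p a b) :
    ∑ ζ : liftClasses p b η, Iab k p r s X a (b + 1) ξ ζ ≤ p * Imax k p r s X a (b + 1) := by
  calc ∑ ζ : liftClasses p b η, Iab k p r s X a (b + 1) ξ ζ
      ≤ #(Finset.univ : Finset (liftClasses p b η)) • Imax k p r s X a (b + 1) :=
        Finset.sum_le_card_nsmul _ _ _ fun ζ _ =>
          Iab_le_Imax k r s X (mem_admissiblePairs_of_mem_liftClasses hb h ζ.2)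
    _ = p * Imax k p r s X a (b + 1) := by
        rw [Finset.card_univ, Fintype.card_coe, card_liftClasses hp, nsmul_eq_mul]

end Maxima

section Conditioning

variable {r t m : ℕ}

lemma exists_Iab_le (hr : 0 < r) (hm : 0 < m) (hmrt : m ≤ 2 * (r * t))
    (h : (r - 1) * (m - 1) < r * t) :
    ∃ C : ℝ, 0 < C ∧ ∀ (k : ℕ) (X : ℝ) (p : ℕ), 0 < p → ∀ (a b : ℕ) (ξ η : ℤ),
      Iab k p r (r * t) X a b ξ η ≤
        C * (Kab k p r t X a b ξ η + (p : ℝ) ^ (2 * ((r * t : ℕ) : ℝ) / m - 1) *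
          ∑ ζ : liftClasses p b η, Iab k p r (r * t) X a (b + 1) ξ ζ) := by
  obtain ⟨C, hC, hmean⟩ := exists_setIntegral_norm_sum_pow_le hr hm hmrt h
  refine ⟨C, hC, fun k X p hp a b ξ η => ?_⟩
  have hlift := hmean (Fexp_mem_natTrigPoly k p r X a ξ)
    fun ζ : liftClasses p b η => fexp_mem_natTrigPoly k p X (b + 1) ζ
  rwa [← fexp_eq_sum_liftClasses k hp, ← Fexp_eq_condSum, Fintype.card_coe,
    card_liftClasses hp] at hlift

lemma exists_Imax_le (hr : 0 < r) (hm : 0 < m) (hmrt : m ≤ 2 * (r * t))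
    (h : (r - 1) * (m - 1) < r * t) :
    ∃ C : ℝ, 0 < C ∧ ∀ (k : ℕ) (X : ℝ) (p : ℕ), 0 < p → ∀ a b : ℕ, a ≠ 0 → b ≠ 0 →
      Imax k p r (r * t) X a b ≤
        C * (Kmax k p r t X a b +
          (p : ℝ) ^ (2 * ((r * t : ℕ) : ℝ) / m) * Imax k p r (r * t) X a (b + 1)) := by
  obtain ⟨C, hC, hI⟩ := exists_Iab_le hr hm hmrt h
  refine ⟨C, hC, fun k X p hp a b ha hb => ?_⟩
  have hK := Kmax_nonneg k p r t X ha b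
  have hI' := Imax_nonneg k p r (r * t) X a (b + 1)
  rw [Imax_eq_iSup]
  refine Real.iSup_le (fun ⟨⟨ξ, η⟩, hξη⟩ => ?_) (by positivity)
  calc Iab k p r (r * t) X a b ξ η
      ≤ C * (Kab k p r t X a b ξ η + (p : ℝ) ^ (2 * ((r * t : ℕ) : ℝ) / m - 1) *
          ∑ ζ : liftClasses p b η, Iab k p r (r * t) X a (b + 1) ξ ζ) := hI k X p hp a b ξ η
    _ ≤ C * (Kmax k p r t X a b + (p : ℝ) ^ (2 * ((r * t : ℕ) : ℝ) / m - 1) *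
          (p * Imax k p r (r * t) X a (b + 1))) := by
        gcongr
        · exact Kab_le_Kmax k r t X ha hξη
        · exact sum_Iab_liftClasses_le k r (r * t) X hp hb hξη
    _ = _ := by rw [← mul_assoc, ← Real.rpow_add_one (by positivity), sub_add_cancel]

theorem lemma4_1_general (hr : 1 ≤ r) (hm : 2 ≤ m) (hmt : m ≤ t + 1) :
    ∃ C : ℝ, 0 < C ∧ ∀ (k : ℕ) (X M : ℝ) (p : ℕ), 1 < p → (p : ℝ) ≤ 2 * M →
      ∀ a b : ℕ, 1 ≤ a → 1 ≤ b →
        Imax k p r (r * t) X a b ≤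
          C * (Kmax k p r t X a b +
            M ^ (2 * ((r * t : ℕ) : ℝ) / m) * Imax k p r (r * t) X a (b + 1)) := by
  have hpigeonhole : (r - 1) * (m - 1) < r * t :=
    Nat.mul_lt_mul_of_lt_of_le (by lia) (by lia) (by lia)
  obtain ⟨C, hC, hI⟩ := exists_Imax_le hr (by lia) (by nlinarith : m ≤ 2 * (r * t)) hpigeonhole
  set e : ℝ := 2 * ((r * t : ℕ) : ℝ) / m
  have he : 0 ≤ e := by positivity
  refine ⟨C * 2 ^ e, by positivity, fun k X M p hp hpM a b ha hb => ?_⟩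
  have hM : 0 ≤ M := by linarith [p.cast_nonneg (α := ℝ)]
  have hK := Kmax_nonneg k p r t X (by lia : a ≠ 0) b
  have hI' := Imax_nonneg k p r (r * t) X a (b + 1)
  have hpe : (p : ℝ) ^ e ≤ 2 ^ e * M ^ e := by
    rw [← Real.mul_rpow zero_le_two hM]
    gcongr
  calc Imax k p r (r * t) X a b
      ≤ C * (Kmax k p r t X a b + (p : ℝ) ^ e * Imax k p r (r * t) X a (b + 1)) :=
        hI k X p (by lia) a b (by lia) (by lia)
    _ ≤ C * (2 ^ e * Kmax k p r t X a b + 2 ^ e * M ^ e * Imax k p r (r * t) X a (b + 1)) := by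
        gcongr
        exact le_mul_of_one_le_left hK (Real.one_le_rpow one_le_two he)
    _ = _ := by ring

end Conditioning

/-- Lemma 4.1: for b > a ≥ 1 one has
I_{a,b}(X) ≤ C (K_{a,b}(X) + M^{2s/3} I_{a,b+1}(X)), with C = C(s,k,r,t). -/
theorem lemma4_1 (k r t : ℕ) (hk : 2 ≤ k)
    (ht1 : max 2 (((k : ℝ) - 1) / 2) ≤ (t : ℝ)) (ht2 : t ≤ k)
    (hr1 : 1 ≤ r) (hr2 : r ≤ k) (hrt : k ≤ r + t) :
    ∃ C : ℝ, 0 < C ∧ ∀ (X M : ℝ), 1 ≤ X → 0 < M →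
      ∀ p : ℕ, p.Prime → M < (p:ℝ) → (p:ℝ) ≤ 2*M →
      ∀ a b : ℕ, 1 ≤ a → a < b →
        Imax k p r (r*t) X a b ≤
          C * (Kmax k p r t X a b +
            M ^ (2*((r*t : ℕ):ℝ)/3) * Imax k p r (r*t) X a (b+1)) := by
  have ht : 2 ≤ t := by exact_mod_cast (le_max_left _ _).trans ht1
  obtain ⟨C, hC, hI⟩ := lemma4_1_general (t := t) hr1 (by simp : 2 ≤ 3) (by lia)
  exact ⟨C, hC, fun X M _ _ p hp _ hpM a b ha hab => hI k X M p hp.one_lt hpM a b ha (by lia)⟩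

end
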